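/- For every context-free grammar G in Chomsky normal form with T nonterminals and every word w in the language L(G), the word w admits a compact G-decomposition; that is, w can be written as a concatenation w = s₁u₁s₂u₂⋯s_k u_k s_{k+1} of words s₁,…,s_{k+1}, u₁,…,u_k over Σ such that (1) for every natural number ℓ, the word s₁u₁^ℓ s₂u₂^ℓ⋯s_k u_k^ℓ s_{k+1} belongs to L(G), and (2) Σ_{i=1}^{k+1}|s_i| ≤ 2^T and k ≤ 2^{T+1} − 2. -/

import Mathlib

namespace Levenshtein

/-- A cost structure for Levenshtein edit distance (as in Mathlib of December 2024). -/
structure Cost (α β δ : Type*) where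
  /-- Cost to delete an element from a list. -/
  delete : α → δ
  /-- Cost to insert an element into a list. -/
  insert : β → δ
  /-- Cost to substitute one element for another in a list. -/
  substitute : α → β → δ

/-- The default cost structure, for which all operations cost `1`
(as in Mathlib of December 2024). -/
def defaultCost {α : Type*} [DecidableEq α] : Cost α α ℕ where
  delete _ := 1
  insert _ := 1
  substitute a b := if a = b then 0 else 1

/-- Implementation of one step of `suffixLevenshtein` (as in Mathlib of December 2024). -/
def impl {α β δ : Type*} [AddZeroClass δ] [Min δ] (C : Cost α β δ)
    (xs : List α) (y : β) (d : {r : List δ // 0 < r.length}) : {r : List δ // 0 < r.length} :=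
  let ⟨ds, w⟩ := d
  xs.zip (ds.zip ds.tail) |>.foldr
    (init := ⟨[C.insert y + ds.getLast (List.length_pos_iff.mp w)], by simp⟩)
    (fun ⟨x, d₀, d₁⟩ ⟨r, w⟩ =>
      ⟨min (C.delete x + r[0]) (min (C.insert y + d₀) (C.substitute x y + d₁)) :: r, by simp⟩)

end Levenshtein

/-- The Levenshtein distances from each suffix of `xs` to `ys`
(as in Mathlib of December 2024). -/
def suffixLevenshtein {α β δ : Type*} [AddZeroClass δ] [Min δ] (C : Levenshtein.Cost α β δ)
    (xs : List α) (ys : List β) : {r : List δ // 0 < r.length} :=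
  ys.foldr
    (Levenshtein.impl C xs)
    (xs.foldr (init := ⟨[0], by simp⟩) (fun a ⟨r, w⟩ => ⟨(C.delete a + r[0]) :: r, by simp⟩))

/-- The Levenshtein distance from `xs` to `ys` with cost structure `C`
(as in Mathlib of December 2024). -/
def levenshtein {α β δ : Type*} [AddZeroClass δ] [Min δ] (C : Levenshtein.Cost α β δ)
    (xs : List α) (ys : List β) : δ :=
  let ⟨r, w⟩ := suffixLevenshtein C xs ys
  r[0]

/-- Levenshtein edit distance between two words. -/
def ed {α : Type*} [DecidableEq α] (w₁ w₂ : List α) : ℕ :=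
  levenshtein Levenshtein.defaultCost w₁ w₂

/-- Edit distance from a word to a language, valued in `ℕ∞`. -/
noncomputable def edWordLang {α : Type*} [DecidableEq α] (w : List α) (L : Language α) : ℕ∞ :=
  ⨅ w' ∈ L, (ed w w' : ℕ∞)

/-- Edit distance from language `L₁` to language `L₂`, valued in `ℕ∞`. -/
noncomputable def edLang {α : Type*} [DecidableEq α] (L₁ L₂ : Language α) : ℕ∞ :=
  ⨆ w ∈ L₁, edWordLang w L₂

/-- `u ^ ℓ` : concatenation of `ℓ` copies of `u`. -/
def wpow {α : Type*} (u : List α) (ℓ : ℕ) : List α := (List.replicate ℓ u).flatten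

/-- The interleaved concatenation `s₁u₁s₂u₂⋯s_k u_k s_{k+1}` where
`ss = [s₁, …, s_{k+1}]` and `us = [u₁, …, u_k]`. -/
def weave {α : Type*} (ss us : List (List α)) : List α :=
  (List.zipWith (· ++ ·) ss us).flatten ++ (ss.drop us.length).flatten

/-- Context-free grammar over the alphabet `T`, with nonterminals in an arbitrary universe
(`ContextFreeGrammar` as in Mathlib of December 2024; the present one has `NT : Type`). -/
structure PolyContextFreeGrammar.{uN, uT} (T : Type uT) where
  /-- Type of nonterminals. -/
  NT : Type uN
  /-- Initial nonterminal. -/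
  initial : NT
  /-- Rewrite rules. -/
  rules : Finset (ContextFreeRule T NT)

namespace PolyContextFreeGrammar

/-- One rewriting step by a rule from `g` sends `u` to `v`. -/
def Produces {T : Type*} (g : PolyContextFreeGrammar T) (u v : List (Symbol T g.NT)) : Prop :=
  ∃ r ∈ g.rules, r.Rewrites u v

/-- `g` can transform `u` to `v` in some number of rewriting steps. -/
abbrev Derives {T : Type*} (g : PolyContextFreeGrammar T) :
    List (Symbol T g.NT) → List (Symbol T g.NT) → Prop :=
  Relation.ReflTransGen g.Produces

/-- `g` can transform its initial nonterminal to `s` in some number of rewriting steps. -/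
def Generates {T : Type*} (g : PolyContextFreeGrammar T) (s : List (Symbol T g.NT)) : Prop :=
  g.Derives [Symbol.nonterminal g.initial] s

/-- The language (set of words) that can be generated by a given context-free grammar `g`. -/
def language {T : Type*} (g : PolyContextFreeGrammar T) : Language T :=
  { w : List T | g.Generates (w.map Symbol.terminal) }

end PolyContextFreeGrammar

/-- A context-free grammar is in Chomsky normal form. -/
def ContextFreeGrammar.IsCNF {α : Type*} (G : PolyContextFreeGrammar α) : Prop :=
  ∀ r ∈ G.rules,
    (∃ z u : G.NT, r.output = [Symbol.nonterminal z, Symbol.nonterminal u]) ∨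
    (∃ a : α, r.output = [Symbol.terminal a]) ∨
    (r.input = G.initial ∧ r.output = [])

/-- Compact `G`-decomposition of the word `w`. -/
def IsCompactDecomp {α : Type*} (G : PolyContextFreeGrammar α) [Fintype G.NT]
    (w : List α) (ss us : List (List α)) : Prop :=
  ss.length = us.length + 1 ∧ w = weave ss us ∧
  (∀ ℓ : ℕ, weave ss (us.map (fun u => wpow u ℓ)) ∈ G.language) ∧
  (ss.map List.length).sum ≤ 2 ^ Fintype.card G.NT ∧
  us.length ≤ 2 ^ (Fintype.card G.NT + 1) - 2

/-- The reachability set `R(u, S')`: states reachable (by any word) from the set of states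
reachable from `S'` upon reading `u`. -/
def reachSet {α σ : Type*} (M : NFA α σ) (u : List α) (S' : Set σ) : Set σ :=
  { q | ∃ v : List α, q ∈ M.evalFrom (M.evalFrom S' u) v }

/-- Prefix closure of a language. -/
def prefLang {α : Type*} (L : Language α) : Language α := { u | ∃ v, u ++ v ∈ L }

namespace CompactAux

variable {α : Type*}

/-- Parse trees all of whose labels lie in `S`. -/
inductive Der (G : PolyContextFreeGrammar α) (S : Finset G.NT) : G.NT → List α → Prop
  | eps (A : G.NT) (hA : A ∈ S) (h : ⟨A, []⟩ ∈ G.rules) : Der G S A []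
  | leaf (A : G.NT) (a : α) (hA : A ∈ S) (h : ⟨A, [Symbol.terminal a]⟩ ∈ G.rules) : Der G S A [a]
  | bin (A B C : G.NT) (u v : List α) (hA : A ∈ S)
      (h : ⟨A, [Symbol.nonterminal B, Symbol.nonterminal C]⟩ ∈ G.rules)
      (hB : Der G S B u) (hC : Der G S C v) : Der G S A (u ++ v)

theorem Der.mem {G : PolyContextFreeGrammar α} {S : Finset G.NT} {A : G.NT} {w : List α}
    (h : Der G S A w) : A ∈ S := by
  cases h <;> assumption

/-- Parse tree with root `A`, other labels in `S`. -/
def Low (G : PolyContextFreeGrammar α) (S : Finset G.NT) (A : G.NT) (w : List α) : Prop :=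
  (⟨A, []⟩ ∈ G.rules ∧ w = []) ∨
  (∃ a, ⟨A, [Symbol.terminal a]⟩ ∈ G.rules ∧ w = [a]) ∨
  (∃ B C u v, ⟨A, [Symbol.nonterminal B, Symbol.nonterminal C]⟩ ∈ G.rules ∧
    Der G S B u ∧ Der G S C v ∧ w = u ++ v)

theorem split {G : PolyContextFreeGrammar α} [Fintype G.NT] [DecidableEq G.NT]
    {S : Finset G.NT} (A : G.NT) {B : G.NT} {w : List α} (h : Der G S B w) :
    Der G (S.erase A) B w ∨
    ∃ x w' y, w = x ++ w' ++ y ∧ Low G (S.erase A) A w' ∧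
      ∀ z, Der G Finset.univ A z → Der G Finset.univ B (x ++ z ++ y) := by
  have aux : ∀ {S : Finset G.NT} {B w}, Der G S B w → Der G Finset.univ B w := by
    intro S B w h
    induction h with
    | eps A hA h => exact .eps A (Finset.mem_univ _) h
    | leaf A a hA h => exact .leaf A a (Finset.mem_univ _) h
    | bin A B C u v hA h _ _ ih1 ih2 => exact .bin A B C u v (Finset.mem_univ _) h ih1 ih2
  induction h with
  | eps B hB h =>
    by_cases e : B = A
    · subst e
      exact .inr ⟨[], [], [], by simp, .inl ⟨h, rfl⟩, by simp⟩
    · exact .inl (.eps B (Finset.mem_erase.2 ⟨e, hB⟩) h)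
  | leaf B a hB h =>
    by_cases e : B = A
    · subst e
      exact .inr ⟨[], [a], [], by simp, .inr (.inl ⟨a, h, rfl⟩), by simp⟩
    · exact .inl (.leaf B a (Finset.mem_erase.2 ⟨e, hB⟩) h)
  | bin B C D u v hB h hC hD ih1 ih2 =>
    rcases ih1 with ih1 | ⟨x, w', y, rfl, hl, hz⟩
    · rcases ih2 with ih2 | ⟨x, w', y, rfl, hl, hz⟩
      · by_cases e : B = A
        · subst e
          exact .inr ⟨[], u ++ v, [], by simp, .inr (.inr ⟨C, D, u, v, h, ih1, ih2, rfl⟩), by simp⟩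
        · exact .inl (.bin B C D u v (Finset.mem_erase.2 ⟨e, hB⟩) h ih1 ih2)
      · refine .inr ⟨u ++ x, w', y, by simp, hl, fun z hA => ?_⟩
        have := Der.bin B C D u _ (Finset.mem_univ _) h (aux hC) (hz z hA)
        simpa using this
    · refine .inr ⟨x, w', y ++ v, by simp, hl, fun z hA => ?_⟩
      have := Der.bin B C D _ v (Finset.mem_univ _) h (hz z hA) (aux hD)
      simpa using this

/-- Pumped value of an item list. -/
def val (ℓ : ℕ) : List (α ⊕ List α) → List α
  | [] => []
  | .inl a :: t => a :: val ℓ t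
  | .inr u :: t => wpow u ℓ ++ val ℓ t

def nl : List (α ⊕ List α) → ℕ
  | [] => 0
  | .inl _ :: t => nl t + 1
  | .inr _ :: t => nl t

def nr : List (α ⊕ List α) → ℕ
  | [] => 0
  | .inl _ :: t => nr t
  | .inr _ :: t => nr t + 1

theorem val_append (ℓ : ℕ) (s t : List (α ⊕ List α)) : val ℓ (s ++ t) = val ℓ s ++ val ℓ t := by
  induction s with
  | nil => rfl
  | cons x s ih => cases x <;> simp [val, ih]

theorem nl_append (s t : List (α ⊕ List α)) : nl (s ++ t) = nl s + nl t := by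
  induction s with
  | nil => simp [nl]
  | cons x s ih => cases x <;> simp [nl, ih]; omega

theorem nr_append (s t : List (α ⊕ List α)) : nr (s ++ t) = nr s + nr t := by
  induction s with
  | nil => simp [nr]
  | cons x s ih => cases x <;> simp [nr, ih]; omega

theorem wpow_one (u : List α) : wpow u 1 = u := by simp [wpow]

theorem pump {G : PolyContextFreeGrammar α} [Fintype G.NT] {A : G.NT} {x y : List α}
    (h : ∀ z, Der G Finset.univ A z → Der G Finset.univ A (x ++ z ++ y)) (ℓ : ℕ) (z : List α)
    (hz : Der G Finset.univ A z) : Der G Finset.univ A (wpow x ℓ ++ z ++ wpow y ℓ) := by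
  induction ℓ with
  | zero => simpa [wpow] using hz
  | succ n ih =>
    have := h _ ih
    have e : wpow y (n+1) = wpow y n ++ y := by
      simp [wpow, List.replicate_succ']
    have e' : wpow x (n+1) = x ++ wpow x n := by
      simp [wpow, List.replicate_succ]
    rw [e, e']
    simpa using this

theorem main {G : PolyContextFreeGrammar α} [Fintype G.NT] (n : ℕ) :
    ∀ (S : Finset G.NT) (_ : S.card = n) (A : G.NT) (w : List α) (_ : Der G S A w),
    ∃ t : List (α ⊕ List α), val 1 t = w ∧ (∀ ℓ, Der G Finset.univ A (val ℓ t)) ∧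
      nl t ≤ 2 ^ n ∧ nr t + 2 ≤ 2 ^ (n+1) := by
  classical
  induction n with
  | zero =>
    intro S hS A w h
    have := h.mem
    rw [Finset.card_eq_zero.1 hS] at this
    simp at this
  | succ n ih =>
    intro S hS A w h
    have hc : (S.erase A).card = n := by rw [Finset.card_erase_of_mem h.mem]; omega
    have hp : 1 ≤ 2 ^ n := Nat.one_le_two_pow
    have e1 : 2 ^ (n+1) = 2 * 2 ^ n := by ring
    have e2 : 2 ^ (n+1+1) = 4 * 2 ^ n := by ring
    rcases split A h with h | ⟨x, w', y, rfl, hl, hz⟩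
    · exact absurd h.mem (by simp)
    clear h
    suffices H : ∃ t : List (α ⊕ List α), val 1 t = w' ∧ (∀ ℓ, Der G Finset.univ A (val ℓ t)) ∧
        nl t ≤ 2 ^ (n+1) ∧ nr t + 4 ≤ 2 ^ (n+1+1) by
      obtain ⟨t, h1, h2, h3, h4⟩ := H
      refine ⟨.inr x :: (t ++ [.inr y]), ?_, fun ℓ => ?_, ?_, ?_⟩
      · simp [val, val_append, h1, wpow_one]
      · have := pump hz ℓ _ (h2 ℓ)
        simpa [val, val_append] using this
      · simpa [nl, nl_append] using h3
      · simp [nr, nr_append]; omega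
    rcases hl with ⟨h, rfl⟩ | ⟨a, h, rfl⟩ | ⟨B, C, u, v, h, hB, hC, rfl⟩
    · exact ⟨[], rfl, fun ℓ => .eps A (Finset.mem_univ _) h, by simp [nl], by simp [nr]; omega⟩
    · exact ⟨[.inl a], rfl, fun ℓ => .leaf A a (Finset.mem_univ _) h,
        by simp [nl]; omega, by simp [nr]; omega⟩
    · obtain ⟨t, h1, h2, h3, h4⟩ := ih _ hc B u hB
      obtain ⟨t', h1', h2', h3', h4'⟩ := ih _ hc C v hC
      refine ⟨t ++ t', by simp [val_append, h1, h1'], fun ℓ => ?_, ?_, ?_⟩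
      · rw [val_append]
        exact .bin A B C _ _ (Finset.mem_univ _) h (h2 ℓ) (h2' ℓ)
      · rw [nl_append]; omega
      · rw [nr_append]; omega

theorem convert (t : List (α ⊕ List α)) : ∃ (s : List α) (ss us : List (List α)),
    ss.length = us.length ∧ (∀ ℓ, weave (s :: ss) (us.map (fun u => wpow u ℓ)) = val ℓ t) ∧
    ((s :: ss).map List.length).sum = nl t ∧ us.length = nr t := by
  induction t with
  | nil => exact ⟨[], [], [], rfl, by simp [weave, val], by simp [nl], by simp [nr]⟩
  | cons x t ih =>
    obtain ⟨s, ss, us, h1, h2, h3, h4⟩ := ih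
    cases x with
    | inl a =>
      refine ⟨a :: s, ss, us, h1, fun ℓ => ?_, ?_, by simp [nr, h4]⟩
      · rw [val, ← h2]
        cases us <;> simp [weave]
      · simp [nl, ← h3]; omega
    | inr u =>
      refine ⟨[], s :: ss, u :: us, by simp [h1], fun ℓ => ?_, ?_, by simp [nr, h4]⟩
      · rw [val, ← h2]
        simp [weave]
      · rw [nl, ← h3]; simp

theorem Derives.left {G : PolyContextFreeGrammar α} {u v : List (Symbol α G.NT)}
    (h : G.Derives u v) (p : List (Symbol α G.NT)) : G.Derives (p ++ u) (p ++ v) := by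
  induction h with
  | refl => exact .refl
  | tail _ h ih =>
    obtain ⟨r, hr, h⟩ := h
    exact ih.tail ⟨r, hr, h.append_left p⟩

theorem Derives.right {G : PolyContextFreeGrammar α} {u v : List (Symbol α G.NT)}
    (h : G.Derives u v) (p : List (Symbol α G.NT)) : G.Derives (u ++ p) (v ++ p) := by
  induction h with
  | refl => exact .refl
  | tail _ h ih =>
    obtain ⟨r, hr, h⟩ := h
    exact ih.tail ⟨r, hr, h.append_right p⟩

theorem step {G : PolyContextFreeGrammar α} {A : G.NT} {o : List (Symbol α G.NT)}
    (h : ⟨A, o⟩ ∈ G.rules) : G.Derives [Symbol.nonterminal A] o :=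
  .single ⟨_, h, by simpa using ContextFreeRule.Rewrites.head (r := ⟨A, o⟩) []⟩

theorem Der.derives {G : PolyContextFreeGrammar α} {S : Finset G.NT} {A : G.NT} {w : List α}
    (h : Der G S A w) : G.Derives [Symbol.nonterminal A] (w.map Symbol.terminal) := by
  induction h with
  | eps A hA h => exact step h
  | leaf A a hA h => exact step h
  | bin A B C u v hA h _ _ ih1 ih2 =>
    rw [List.map_append]
    exact (step h).trans ((Derives.right ih1 [Symbol.nonterminal C]).trans (Derives.left ih2 _))

/-- Forest for a sentential form. -/
def DL (G : PolyContextFreeGrammar α) [Fintype G.NT] : List (Symbol α G.NT) → List α → Prop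
  | [], w => w = []
  | .terminal a :: xs, w => ∃ v, w = a :: v ∧ DL G xs v
  | .nonterminal A :: xs, w => ∃ u v, w = u ++ v ∧ Der G Finset.univ A u ∧ DL G xs v

theorem DL_append {G : PolyContextFreeGrammar α} [Fintype G.NT] (xs ys : List (Symbol α G.NT)) :
    ∀ w, DL G (xs ++ ys) w ↔ ∃ u v, w = u ++ v ∧ DL G xs u ∧ DL G ys v := by
  induction xs with
  | nil => intro w; simp [DL]
  | cons x xs ih =>
    intro w
    cases x with
    | terminal a =>
      simp only [List.cons_append, DL, ih]
      constructor
      · rintro ⟨_, rfl, u, v, rfl, h1, h2⟩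
        exact ⟨a :: u, v, rfl, ⟨u, rfl, h1⟩, h2⟩
      · rintro ⟨_, v, rfl, ⟨u, rfl, h1⟩, h2⟩
        exact ⟨_, rfl, u, v, rfl, h1, h2⟩
    | nonterminal A =>
      simp only [List.cons_append, DL, ih]
      constructor
      · rintro ⟨p, _, rfl, hp, u, v, rfl, h1, h2⟩
        exact ⟨p ++ u, v, by simp, ⟨p, u, rfl, hp, h1⟩, h2⟩
      · rintro ⟨_, v, rfl, ⟨p, u, rfl, hp, h1⟩, h2⟩
        exact ⟨p, u ++ v, by simp, hp, u, v, rfl, h1, h2⟩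

theorem DL_terminal {G : PolyContextFreeGrammar α} [Fintype G.NT] (w : List α) :
    DL G (w.map Symbol.terminal) w := by
  induction w with
  | nil => simp [DL]
  | cons a w ih => exact ⟨w, rfl, ih⟩

theorem DL_step {G : PolyContextFreeGrammar α} [Fintype G.NT]
    (hG : ContextFreeGrammar.IsCNF G) {x y : List (Symbol α G.NT)} (h : G.Produces x y)
    {w : List α} (hy : DL G y w) : DL G x w := by
  obtain ⟨⟨A, o⟩, hr, h⟩ := h
  obtain ⟨p, q, rfl, rfl⟩ := h.exists_parts
  rw [DL_append, ] at hy ⊢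
  obtain ⟨_, v, rfl, h1, h2⟩ := hy
  rw [DL_append] at h1
  obtain ⟨a, b, rfl, h1, h3⟩ := h1
  refine ⟨_, v, rfl, ?_, h2⟩
  rw [DL_append]
  refine ⟨a, b, rfl, h1, b, [], by simp, ?_, rfl⟩
  have := hG _ hr
  simp only at this
  rcases this with ⟨z, u, rfl⟩ | ⟨c, rfl⟩ | ⟨rfl, rfl⟩
  · obtain ⟨b1, _, rfl, hb1, b2, _, rfl, hb2, rfl⟩ := h3
    rw [List.append_nil]
    exact .bin _ z u _ _ (Finset.mem_univ _) hr hb1 hb2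
  · obtain ⟨_, rfl, rfl⟩ := h3
    exact .leaf _ c (Finset.mem_univ _) hr
  · obtain rfl := h3
    exact .eps _ (Finset.mem_univ _) hr

theorem der_of_mem {G : PolyContextFreeGrammar α} [Fintype G.NT]
    (hG : ContextFreeGrammar.IsCNF G) {w : List α} (hw : w ∈ G.language) :
    Der G Finset.univ G.initial w := by
  have h : G.Derives [Symbol.nonterminal G.initial] (w.map Symbol.terminal) := hw
  have key : ∀ x, G.Derives x (w.map Symbol.terminal) → DL G x w := by
    intro x hx
    induction hx using Relation.ReflTransGen.head_induction_on with
    | refl => exact DL_terminal w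
    | head h _ ih => exact DL_step hG h ih
  have this := key _ h
  clear h key hw
  obtain ⟨u, v, rfl, h, rfl⟩ := this
  simpa using h

end CompactAux

/-- Every word in the language of a CNF grammar admits a compact
`G`-decomposition. -/
theorem compact_decomposition_exists {α : Type*} (G : PolyContextFreeGrammar α) [Fintype G.NT]
    (hG : ContextFreeGrammar.IsCNF G) (w : List α) (hw : w ∈ G.language) :
    ∃ ss us : List (List α), IsCompactDecomp G w ss us := by
  obtain ⟨t, h1, h2, h3, h4⟩ := CompactAux.main _ Finset.univ rfl _ w (CompactAux.der_of_mem hG hw)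
  obtain ⟨s, ss, us, g1, g2, g3, g4⟩ := CompactAux.convert t
  refine ⟨s :: ss, us, by simp [g1], ?_, fun ℓ => ?_, ?_, ?_⟩
  · rw [← h1, ← g2 1]
    simp [CompactAux.wpow_one]
  · rw [g2]
    exact CompactAux.Der.derives (h2 ℓ)
  · rw [g3]; exact h3
  · rw [g4]; exact Nat.le_sub_of_add_le h4
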